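/- Let n = 2, let Ω ⊂ ℝ² be a bounded open convex domain, and let u be a function of class C³ on a neighborhood of the closure of Ω that is strictly convex (its Hessian D²u is positive definite) and satisfies det D²u = 1 in Ω together with u = 0 on ∂Ω. Let x₀ ∈ Ω be the unique critical point of u (the point where Du = 0). Then the function φ = Σ_{k,l=1}^2 u^{kl} u_k u_l − 2u attains its minimum over the closure of Ω either on the boundary ∂Ω or at x₀; i.e., for every x in the closure of Ω, φ(x) ≥ min{ inf_{y ∈ ∂Ω} φ(y), φ(x₀) }, and φ(x₀) = −2u(x₀). -/

import Mathlib

/-!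
The proof uses H. Lewy's transformation. Put `ζ = (x₁ + u₁) + i (x₂ + u₂)` and
`w = (x₁ - u₁) - i (x₂ - u₂)`. Since `D²u > 0`, the map `x ↦ ζ` is a local diffeomorphism, and
`det D²u = 1` is exactly the Cauchy–Riemann system for `w` as a function of `ζ` (`lewy_deriv`).
Locally `w = F(ζ)` with `F` holomorphic and `|F'| < 1`, so no elliptic regularity theory is needed
although `u` is only `C³`.

With `P = 8 ∂u/∂ζ = ζ̄ - F + F' (ζ - F̄)` and `J = 1 - |F'|²` one has `φ = |P|²/(4J) - 2u`
(`phiFn_eq_lewy`), and a computation gives `∂φ/∂ζ = F'' P̄² / (4J²)` (`hasDerivAt_phi_path`).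
Moreover `P ≠ 0` where `Du ≠ 0`. Near such a point either `F''` vanishes identically, and `φ` is
locally constant, or `F''` has a zero of finite order there, and `φ` strictly decreases along some
ray (`eventually_const_of_isLocalMin`). Thus `φ` is constant near every local minimum other than
`x₀` (`phiFn_eventually_const`).

If the minimum of `φ` over the closure of `Ω` were attained neither on `∂Ω` nor at `x₀`, the set of
minimum points would be a nonempty, bounded, open and closed subset of the plane, which is absurd.
-/

open scoped BigOperators

/-- First partial derivative in direction `i`. -/
noncomputable def pd {n : ℕ} (i : Fin n) (f : EuclideanSpace ℝ (Fin n) → ℝ) :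
    EuclideanSpace ℝ (Fin n) → ℝ :=
  fun x => fderiv ℝ f x (EuclideanSpace.single i 1)

/-- The Hessian matrix `(u_{ij})` of `u` at `x`. -/
noncomputable def hess {n : ℕ} (u : EuclideanSpace ℝ (Fin n) → ℝ)
    (x : EuclideanSpace ℝ (Fin n)) : Matrix (Fin n) (Fin n) ℝ :=
  Matrix.of fun i j => pd i (pd j u) x

/-- `φ = Σ u^{kl} u_k u_l − 2u`. -/
noncomputable def phiFn {n : ℕ} (u : EuclideanSpace ℝ (Fin n) → ℝ)
    (x : EuclideanSpace ℝ (Fin n)) : ℝ :=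
  (∑ k, ∑ l, (hess u x)⁻¹ k l * pd k u x * pd l u x) - 2 * u x

open Complex ComplexConjugate Topology

/-! ### The two complex-analytic ingredients -/

/-- The identity `∂φ/∂ζ = F'' P̄² / (4J²)` for `φ = |P|²/(4J) - 2V`, where
`P = ζ̄ - F + F' (ζ - F̄)`, `J = 1 - |F'|²` and `∂V/∂ζ = P/8`, stated for the derivative along a
curve `z`; here `f`, `f1` and `f2` are the values of `F`, `F'` and `F''` on the curve. -/
lemma hasDerivAt_phi_path (z f f1 : ℝ → ℂ) (V : ℝ → ℝ) (v f2 : ℂ) (t : ℝ)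
    (hz : HasDerivAt z v t) (hf : HasDerivAt f (f1 t * v) t) (hf1 : HasDerivAt f1 (f2 * v) t)
    (hV : HasDerivAt V
      (((conj (z t) - f t + f1 t * (z t - conj (f t))) * v).re / 4) t)
    (hJ : (1 : ℂ) - f1 t * conj (f1 t) ≠ 0) :
    HasDerivAt (fun s => ((conj (z s) - f s + f1 s * (z s - conj (f s))) *
        conj (conj (z s) - f s + f1 s * (z s - conj (f s))) /
        (4 * (1 - f1 s * conj (f1 s)))).re - 2 * V s)
      ((f2 * (conj (conj (z t) - f t + f1 t * (z t - conj (f t))) ^ 2 /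
        (2 * (1 - f1 t * conj (f1 t)) ^ 2)) * v).re) t := by
  have cj : ∀ {h : ℝ → ℂ} {h' : ℂ}, HasDerivAt h h' t →
      HasDerivAt (fun s => conj (h s)) (conj h') t := fun h => h.star
  have hP := ((cj hz).sub hf).add (hf1.mul (hz.sub (cj hf)))
  have hJ' := ((hasDerivAt_const t (1 : ℂ)).sub (hf1.mul (cj hf1))).const_mul 4
  have hq := (hP.mul (cj hP)).div hJ' (by
    simpa using hJ)
  have hre := (Complex.reCLM.hasFDerivAt.comp_hasDerivAt t hq).sub (hV.const_mul 2)
  refine hre.congr_deriv ?_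
  simp only [Complex.reCLM_apply, Pi.add_apply, Pi.sub_apply, Pi.mul_apply]
  have key : ∀ a b : ℂ, a + conj a = b + conj b → a.re = b.re := by
    intro a b h
    have := congrArg Complex.re h
    simp at this
    linarith
  have hsub : ∀ (a : ℂ) (b : ℂ), a.re - 2 * (b.re / 4) = (a - b / 2).re := by
    intro a b
    simp
    ring
  rw [hsub]
  apply key
  have hJ2 : (1 : ℂ) - conj (f1 t) * f1 t ≠ 0 := by rwa [mul_comm]
  simp only [map_add, map_sub, map_mul, map_div₀, map_pow, Complex.conj_conj, map_one,
    map_ofNat, map_zero]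
  generalize conj (z t) = Z at *
  generalize conj (f t) = G at *
  generalize conj (f1 t) = G1 at *
  generalize conj f2 = G2 at *
  generalize conj v = w at *
  rw [mul_comm G1 (f1 t)]
  field_simp
  ring

/-- If `dΦ = Re (F₂ R dζ)` with `F₂` holomorphic and `R` continuous and nonzero at `ζ₀`, then `Φ`
is constant near a local minimum `ζ₀`: otherwise `F₂ = (ζ - ζ₀)ⁿ h` with `h ζ₀ ≠ 0`, and `Φ`
strictly decreases along a ray from `ζ₀` whose direction `v` makes `vⁿ⁺¹ h(ζ₀) R(ζ₀)` negative. -/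
lemma eventually_const_of_isLocalMin (Φ : ℂ → ℝ) (F2 R : ℂ → ℂ) (ζ₀ : ℂ)
    (hF2 : AnalyticAt ℂ F2 ζ₀) (hR : ContinuousAt R ζ₀) (hR0 : R ζ₀ ≠ 0)
    (hd : ∀ᶠ ζ in 𝓝 ζ₀, ∀ (v : ℂ) (t : ℝ), ζ₀ + t * v = ζ →
      HasDerivAt (fun s : ℝ => Φ (ζ₀ + s * v)) ((F2 ζ * R ζ * v).re) t)
    (hmin : IsLocalMin Φ ζ₀) : ∀ᶠ ζ in 𝓝 ζ₀, Φ ζ = Φ ζ₀ := by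
  by_cases h0 : ∀ᶠ ζ in 𝓝 ζ₀, F2 ζ = 0
  · obtain ⟨r, hr, hb⟩ := Metric.eventually_nhds_iff_ball.1 (hd.and h0)
    refine Metric.eventually_nhds_iff_ball.2 ⟨r, hr, fun ζ hζ => ?_⟩
    have hder : ∀ t ∈ Set.Icc (0 : ℝ) 1,
        HasDerivAt (fun s : ℝ => Φ (ζ₀ + s * (ζ - ζ₀))) 0 t := by
      intro t ht
      have hmem : ζ₀ + t * (ζ - ζ₀) ∈ Metric.ball ζ₀ r := by
        rw [mem_ball_iff_norm] at hζ ⊢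
        simp only [add_sub_cancel_left, norm_mul, Complex.norm_real, Real.norm_eq_abs,
          abs_of_nonneg ht.1]
        nlinarith [norm_nonneg (ζ - ζ₀), ht.2]
      have := (hb _ hmem).1 (ζ - ζ₀) t rfl
      rwa [(hb _ hmem).2, zero_mul, zero_mul, Complex.zero_re] at this
    have := constant_of_has_deriv_right_zero
      (fun t ht => (hder t ht).continuousAt.continuousWithinAt)
      (fun t ht => (hder t ⟨ht.1, ht.2.le⟩).hasDerivWithinAt) 1 (by simp)
    simpa using this
  · exfalso
    obtain ⟨n, h, hh, hh0, hfac⟩ := hF2.exists_eventuallyEq_pow_smul_nonzero_iff.2 h0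
    obtain ⟨v, hv⟩ : ∃ v : ℂ, v ^ (n + 1) = -conj (h ζ₀ * R ζ₀) :=
      IsAlgClosed.exists_pow_nat_eq _ (Nat.succ_pos n)
    have hneg : ∀ᶠ ζ in 𝓝 ζ₀, (v ^ (n + 1) * (h ζ * R ζ)).re < 0 := by
      have hc : ContinuousAt (fun ζ => (v ^ (n + 1) * (h ζ * R ζ)).re) ζ₀ :=
        Complex.continuous_re.continuousAt.comp
          (continuousAt_const.mul (hh.continuousAt.mul hR))
      refine hc.eventually_lt continuousAt_const ?_
      rw [hv, neg_mul, mul_comm, Complex.mul_conj]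
      simp only [Complex.neg_re, Complex.ofReal_re, neg_lt_zero]
      exact Complex.normSq_pos.2 (mul_ne_zero hh0 hR0)
    obtain ⟨r, hr, hb⟩ := Metric.eventually_nhds_iff_ball.1
      (hd.and (hfac.and (hneg.and hmin)))
    obtain ⟨δ, hδ, hδb⟩ : ∃ δ : ℝ, 0 < δ ∧ ∀ t ∈ Set.Icc (0 : ℝ) δ,
        ζ₀ + t * v ∈ Metric.ball ζ₀ r := by
      refine ⟨r / (2 * (‖v‖ + 1)), by positivity, fun t ht => ?_⟩
      rw [mem_ball_iff_norm]
      simp only [add_sub_cancel_left, norm_mul, Complex.norm_real, Real.norm_eq_abs,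
          abs_of_nonneg ht.1]
      have h2 := (le_div_iff₀ (by positivity)).1 ht.2
      nlinarith [norm_nonneg v, ht.1]
    have hder : ∀ t ∈ Set.Icc (0 : ℝ) δ, HasDerivAt (fun s : ℝ => Φ (ζ₀ + s * v))
        (t ^ n * (v ^ (n + 1) * (h (ζ₀ + t * v) * R (ζ₀ + t * v))).re) t := by
      intro t ht
      have hm := hb _ (hδb t ht)
      refine (hm.1 v t rfl).congr_deriv ?_
      rw [hm.2.1, ← Complex.re_ofReal_mul]
      congr 1
      simp only [add_sub_cancel_left, smul_eq_mul]
      push_cast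
      ring
    have hanti : StrictAntiOn (fun s : ℝ => Φ (ζ₀ + s * v)) (Set.Icc 0 δ) := by
      refine strictAntiOn_of_deriv_neg (convex_Icc _ _)
        (fun t ht => (hder t ht).continuousAt.continuousWithinAt) fun t ht => ?_
      rw [interior_Icc] at ht
      have ht' : t ∈ Set.Icc (0 : ℝ) δ := ⟨ht.1.le, ht.2.le⟩
      rw [(hder t ht').deriv]
      exact mul_neg_of_pos_of_neg (pow_pos ht.1 n) (hb _ (hδb t ht')).2.2.1
    have hlt := hanti ⟨le_rfl, hδ.le⟩ ⟨hδ.le, le_rfl⟩ hδ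
    have hle := (hb _ (hδb δ ⟨hδ.le, le_rfl⟩)).2.2.2
    simp only [Complex.ofReal_zero, zero_mul, add_zero] at hlt
    exact absurd hlt (not_lt.2 hle)

/-! ### The Lewy transformation -/

/-- The plane `ℝ²` with its Euclidean norm. -/
abbrev Plane := EuclideanSpace ℝ (Fin 2)

/-- The Lewy map `x ↦ ζ = (x₁ + u₁) + i (x₂ + u₂)`. -/
noncomputable def lewyMap (u : Plane → ℝ) (x : Plane) : ℂ :=
  Complex.equivRealProdCLM.symm (x 0 + pd 0 u x, x 1 + pd 1 u x)

/-- The conjugate Lewy map `x ↦ w = (x₁ - u₁) - i (x₂ - u₂)`, a holomorphic function of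
`lewyMap u x` when `det D²u = 1`. -/
noncomputable def lewyConj (u : Plane → ℝ) (x : Plane) : ℂ :=
  Complex.equivRealProdCLM.symm (x 0 - pd 0 u x, -(x 1 - pd 1 u x))

/-- The complex derivative `dw/dζ` expressed through the Hessian of `u`. -/
noncomputable def lewySlope (u : Plane → ℝ) (x : Plane) : ℂ :=
  (⟨hess u x 1 1 - hess u x 0 0, 2 * hess u x 0 1⟩ : ℂ) /
    ((2 + hess u x 0 0 + hess u x 1 1 : ℝ) : ℂ)

lemma contDiffOn_pd {u : Plane → ℝ} {U : Set Plane} (hU : IsOpen U) {m n : WithTop ℕ∞}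
    (hmn : m + 1 ≤ n) (hu : ContDiffOn ℝ n u U) (i : Fin 2) : ContDiffOn ℝ m (pd i u) U :=
  (hu.fderiv_of_isOpen hU hmn).clm_apply contDiffOn_const

lemma fderiv_apply_eq (f : Plane → ℝ) (x e : Plane) :
    fderiv ℝ f x e = e 0 * pd 0 f x + e 1 * pd 1 f x := by
  have he : e = e 0 • EuclideanSpace.single 0 1 + e 1 • EuclideanSpace.single 1 1 := by
    ext i
    fin_cases i <;> simp
  conv_lhs => rw [he]
  simp [pd]

/-- When `det D²u = 1` the inverse Hessian is its adjugate, so `φ` is polynomial in the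
derivatives of `u`. -/
lemma phiFn_eq {u : Plane → ℝ} {x : Plane} (h : (hess u x).det = 1) :
    phiFn u x = hess u x 1 1 * pd 0 u x ^ 2
      - (hess u x 0 1 + hess u x 1 0) * pd 0 u x * pd 1 u x
      + hess u x 0 0 * pd 1 u x ^ 2 - 2 * u x := by
  simp only [phiFn, Matrix.inv_def, h, Ring.inverse_one, one_smul, Matrix.adjugate_fin_two,
    Fin.sum_univ_two]
  simp
  ring

lemma hess_facts {u : Plane → ℝ} {x : Plane} (hp : (hess u x).PosDef)
    (h : (hess u x).det = 1) : hess u x 1 0 = hess u x 0 1 ∧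
      hess u x 0 0 * hess u x 1 1 - hess u x 0 1 ^ 2 = 1 ∧
      0 < hess u x 0 0 ∧ 0 < hess u x 1 1 := by
  have hs : hess u x 1 0 = hess u x 0 1 := by
    simpa using (hp.isHermitian.apply 1 0).symm
  rw [Matrix.det_fin_two, hs] at h
  exact ⟨hs, by linarith, hp.diag_pos, hp.diag_pos⟩

/-- The Lewy map is a local diffeomorphism at `x`, and `dw = μ dζ` there with
`μ = lewySlope u x`: the Cauchy–Riemann equations for `w` as a function of `ζ`. -/
lemma lewy_deriv {u : Plane → ℝ} {x : Plane} (hu : ∀ i, ContDiffAt ℝ 2 (pd i u) x)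
    (hp : (hess u x).PosDef) (h : (hess u x).det = 1) :
    ∃ (T : Plane ≃L[ℝ] ℂ) (W : Plane →L[ℝ] ℂ),
      HasStrictFDerivAt (lewyMap u) (T : Plane →L[ℝ] ℂ) x ∧ HasFDerivAt (lewyConj u) W x ∧
      (∀ e, W e = lewySlope u x * T e) ∧
      (∀ e, T e + conj (W e) = 2 * (⟨e 0, e 1⟩ : ℂ)) := by
  obtain ⟨hs, hdet, ha, hc⟩ := hess_facts hp h
  have hd : ∀ i, HasStrictFDerivAt (pd i u) (fderiv ℝ (pd i u) x) x := fun i =>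
    (hu i).hasStrictFDerivAt (by norm_num)
  have hx : ∀ i : Fin 2, HasStrictFDerivAt (fun y : Plane => y i)
      (EuclideanSpace.proj (𝕜 := ℝ) i : Plane →L[ℝ] ℝ) x := fun i =>
    (EuclideanSpace.proj (𝕜 := ℝ) i : Plane →L[ℝ] ℝ).hasStrictFDerivAt
  have hT := Complex.equivRealProdCLM.symm.toContinuousLinearMap.hasStrictFDerivAt.comp x
    (((hx 0).add (hd 0)).prodMk ((hx 1).add (hd 1)))
  have hW := Complex.equivRealProdCLM.symm.toContinuousLinearMap.hasStrictFDerivAt.comp x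
    (((hx 0).sub (hd 0)).prodMk ((hx 1).sub (hd 1)).neg)
  have hH : ∀ (i : Fin 2) (e : Plane), fderiv ℝ (pd i u) x e
      = e 0 * hess u x 0 i + e 1 * hess u x 1 i := fun i e => fderiv_apply_eq _ _ _
  set T' := (Complex.equivRealProdCLM.symm.toContinuousLinearMap).comp
    (((EuclideanSpace.proj (𝕜 := ℝ) 0 : Plane →L[ℝ] ℝ) + fderiv ℝ (pd 0 u) x).prod
      ((EuclideanSpace.proj (𝕜 := ℝ) 1 : Plane →L[ℝ] ℝ) + fderiv ℝ (pd 1 u) x)) with hT'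
  set W' := (Complex.equivRealProdCLM.symm.toContinuousLinearMap).comp
    (((EuclideanSpace.proj (𝕜 := ℝ) 0 : Plane →L[ℝ] ℝ) - fderiv ℝ (pd 0 u) x).prod
      (-((EuclideanSpace.proj (𝕜 := ℝ) 1 : Plane →L[ℝ] ℝ) - fderiv ℝ (pd 1 u) x))) with hW'
  have hTre : ∀ e, (T' e).re = e 0 + (e 0 * hess u x 0 0 + e 1 * hess u x 0 1) := by
    intro e; simp [hT', hH, hs]
  have hTim : ∀ e, (T' e).im = e 1 + (e 0 * hess u x 0 1 + e 1 * hess u x 1 1) := by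
    intro e; simp [hT', hH]
  have hWre : ∀ e, (W' e).re = e 0 - (e 0 * hess u x 0 0 + e 1 * hess u x 0 1) := by
    intro e; simp [hW', hH, hs]
  have hWim : ∀ e, (W' e).im = -(e 1 - (e 0 * hess u x 0 1 + e 1 * hess u x 1 1)) := by
    intro e; simp [hW', hH]
  have hinj : Function.Injective (T' : Plane →ₗ[ℝ] ℂ) := by
    rw [← LinearMap.ker_eq_bot, LinearMap.ker_eq_bot']
    intro e he
    have h1 := hTre e
    have h2 := hTim e
    have he' : T' e = 0 := he
    rw [he'] at h1 h2
    simp only [Complex.zero_re, Complex.zero_im] at h1 h2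
    have hD : (2 + hess u x 0 0 + hess u x 1 1) ≠ 0 := by positivity
    have e0 : e 0 = 0 := by
      apply mul_left_cancel₀ hD
      linear_combination (-(1 + hess u x 1 1)) * h1 + hess u x 0 1 * h2 - e 0 * hdet
    have e1 : e 1 = 0 := by
      apply mul_left_cancel₀ hD
      linear_combination (-(1 + hess u x 0 0)) * h2 + hess u x 0 1 * h1 - e 1 * hdet
    ext i
    fin_cases i
    · exact e0
    · exact e1
  have hfr : Module.finrank ℝ Plane = Module.finrank ℝ ℂ := by
    simp [Complex.finrank_real_complex]
  let T := ((T' : Plane →ₗ[ℝ] ℂ).linearEquivOfInjective hinj hfr).toContinuousLinearEquiv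
  have hTT : (T : Plane →L[ℝ] ℂ) = T' := by
    ext e
    rfl
  refine ⟨T, W', by rw [hTT]; exact hT, hW.hasFDerivAt, fun e => ?_, fun e => ?_⟩
  · change W' e = lewySlope u x * T' e
    have hD : ((2 + hess u x 0 0 + hess u x 1 1 : ℝ) : ℂ) ≠ 0 := by
      exact_mod_cast (by positivity : (2 + hess u x 0 0 + hess u x 1 1) ≠ 0)
    rw [lewySlope, div_mul_eq_mul_div, eq_div_iff hD]
    apply Complex.ext
    · rw [Complex.re_mul_ofReal, Complex.mul_re, hTre, hTim, hWre]
      dsimp only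
      linear_combination (-2 * e 0) * hdet
    · rw [Complex.im_mul_ofReal, Complex.mul_im, hTre, hTim, hWim]
      dsimp only
      linear_combination (2 * e 1) * hdet
  · change T' e + conj (W' e) = _
    apply Complex.ext
    · simp [hTre, hWre]; ring
    · simp [hTim, hWim]; ring

/-- `1 - |μ|² = 4 / (2 + Δu)`. -/
lemma lewySlope_J {u : Plane → ℝ} {x : Plane} (hp : (hess u x).PosDef)
    (h : (hess u x).det = 1) : (1 : ℂ) - lewySlope u x * conj (lewySlope u x) =
      ((4 / (2 + hess u x 0 0 + hess u x 1 1) : ℝ) : ℂ) := by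
  obtain ⟨hs, hdet, ha, hc⟩ := hess_facts hp h
  have hD : (2 + hess u x 0 0 + hess u x 1 1) ≠ 0 := by positivity
  rw [Complex.mul_conj, lewySlope, Complex.normSq_div, Complex.normSq_ofReal,
    Complex.normSq_mk]
  norm_cast
  field_simp
  linear_combination 4 * hdet

/-- The quantity `P = 8 ∂u/∂ζ` at `x`, in the form `ζ̄ - w + μ (ζ - w̄)`. -/
noncomputable def lewyP (u : Plane → ℝ) (x : Plane) : ℂ :=
  conj (lewyMap u x) - lewyConj u x +
    lewySlope u x * (lewyMap u x - conj (lewyConj u x))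

lemma lewyP_eq (u : Plane → ℝ) (x : Plane) : lewyP u x =
    2 * (conj (⟨pd 0 u x, pd 1 u x⟩ : ℂ) + lewySlope u x * ⟨pd 0 u x, pd 1 u x⟩) := by
  have h1 : conj (lewyMap u x) - lewyConj u x = 2 * conj (⟨pd 0 u x, pd 1 u x⟩ : ℂ) := by
    apply Complex.ext <;> simp [lewyMap, lewyConj] <;> ring
  have h2 : lewyMap u x - conj (lewyConj u x) = 2 * (⟨pd 0 u x, pd 1 u x⟩ : ℂ) := by
    apply Complex.ext <;> simp [lewyMap, lewyConj] <;> ring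
  rw [lewyP, h1, h2]
  ring

/-- `φ = |P|² / (4 (1 - |μ|²)) - 2u`. -/
lemma phiFn_eq_lewy {u : Plane → ℝ} {x : Plane} (hp : (hess u x).PosDef)
    (h : (hess u x).det = 1) : phiFn u x =
      (lewyP u x * conj (lewyP u x) /
        (4 * (1 - lewySlope u x * conj (lewySlope u x)))).re - 2 * u x := by
  obtain ⟨hs, hdet, ha, hc⟩ := hess_facts hp h
  have hD : (2 + hess u x 0 0 + hess u x 1 1) ≠ 0 := by positivity
  rw [phiFn_eq h, lewySlope_J hp h, Complex.mul_conj, hs]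
  have : lewyP u x = (2 * (conj (⟨pd 0 u x, pd 1 u x⟩ : ℂ) *
      ((2 + hess u x 0 0 + hess u x 1 1 : ℝ) : ℂ) +
      (⟨hess u x 1 1 - hess u x 0 0, 2 * hess u x 0 1⟩ : ℂ) * ⟨pd 0 u x, pd 1 u x⟩)) /
      ((2 + hess u x 0 0 + hess u x 1 1 : ℝ) : ℂ) := by
    have hD' : ((2 + hess u x 0 0 + hess u x 1 1 : ℝ) : ℂ) ≠ 0 := by exact_mod_cast hD
    rw [lewyP_eq, lewySlope]
    field_simp
  rw [this, Complex.normSq_div, Complex.normSq_ofReal]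
  norm_cast
  rw [Complex.normSq_apply]
  simp only [Complex.mul_re, Complex.mul_im, Complex.add_re, Complex.add_im, Complex.conj_re,
    Complex.conj_im, Complex.ofReal_re, Complex.ofReal_im, Complex.re_ofNat, Complex.im_ofNat]
  field_simp
  generalize hess u x 0 0 = a at *
  generalize hess u x 1 1 = c at *
  generalize hess u x 0 1 = b at *
  generalize pd 0 u x = p
  generalize pd 1 u x = q
  linear_combination (16 * (p ^ 2 + q ^ 2)) * hdet

lemma lewyP_ne_zero {u : Plane → ℝ} {x : Plane} (hp : (hess u x).PosDef)
    (h : (hess u x).det = 1) (hg : fderiv ℝ u x ≠ 0) : lewyP u x ≠ 0 := by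
  obtain ⟨hs, hdet, ha, hc⟩ := hess_facts hp h
  intro h0
  rw [lewyP_eq] at h0
  have h1 : conj (⟨pd 0 u x, pd 1 u x⟩ : ℂ) = -(lewySlope u x * ⟨pd 0 u x, pd 1 u x⟩) := by
    have := (mul_eq_zero.1 h0).resolve_left two_ne_zero
    exact eq_neg_of_add_eq_zero_left this
  have h2 := congrArg Complex.normSq h1
  rw [Complex.normSq_conj, Complex.normSq_neg, Complex.normSq_mul] at h2
  have h3 := lewySlope_J hp h
  rw [Complex.mul_conj] at h3
  have h4 : 1 - Complex.normSq (lewySlope u x) = 4 / (2 + hess u x 0 0 + hess u x 1 1) := by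
    exact_mod_cast h3
  have h5 : 0 < 4 / (2 + hess u x 0 0 + hess u x 1 1) := by positivity
  have h6 : Complex.normSq (⟨pd 0 u x, pd 1 u x⟩ : ℂ) = 0 := by
    have : (1 - Complex.normSq (lewySlope u x)) *
        Complex.normSq (⟨pd 0 u x, pd 1 u x⟩ : ℂ) = 0 := by linear_combination h2
    exact (mul_eq_zero.1 this).resolve_left (by rw [h4]; exact h5.ne')
  rw [Complex.normSq_eq_zero, Complex.ext_iff] at h6
  simp only [Complex.zero_re, Complex.zero_im] at h6
  apply hg
  ext e
  rw [fderiv_apply_eq, h6.1, h6.2]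
  simp

/-! ### The minimum principle -/

/-- Away from the critical point, `φ` is constant near each of its local minima. -/
lemma phiFn_eventually_const {u : Plane → ℝ} {Ω : Set Plane} (hΩo : IsOpen Ω)
    (hu : ContDiffOn ℝ 3 u Ω) (hpos : ∀ x ∈ Ω, (hess u x).PosDef)
    (hMA : ∀ x ∈ Ω, (hess u x).det = 1) {a : Plane} (ha : a ∈ Ω) (hg : fderiv ℝ u a ≠ 0)
    (hmin : IsLocalMin (phiFn u) a) : ∀ᶠ x in 𝓝 a, phiFn u x = phiFn u a := by
  have hpd : ∀ x ∈ Ω, ∀ i, ContDiffAt ℝ 2 (pd i u) x := fun x hx i =>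
    (contDiffOn_pd hΩo (by norm_num) hu i).contDiffAt (hΩo.mem_nhds hx)
  have hL := fun x hx => lewy_deriv (hpd x hx) (hpos x hx) (hMA x hx)
  obtain ⟨T₀, W₀, hT₀, -⟩ := hL a ha
  -- `e.symm` is the local inverse `ζ ↦ x` of the Lewy map near `a`.
  let e := hT₀.toOpenPartialHomeomorph (lewyMap u)
  have hae : a ∈ e.source := hT₀.mem_toOpenPartialHomeomorph_source
  let N : Set ℂ := e.target ∩ e.symm ⁻¹' Ω
  have hNo : IsOpen N := e.isOpen_inter_preimage_symm hΩo
  have hea : e.symm (e a) = a := e.left_inv hae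
  have haN : e a ∈ N := ⟨e.map_source hae, by simpa [hea] using ha⟩
  let F : ℂ → ℂ := fun ζ => lewyConj u (e.symm ζ)
  let F1 : ℂ → ℂ := fun ζ => lewySlope u (e.symm ζ)
  let P : ℂ → ℂ := fun ζ => conj ζ - F ζ + F1 ζ * (ζ - conj (F ζ))
  have hinv : ∀ ζ ∈ N, lewyMap u (e.symm ζ) = ζ := fun ζ hζ => e.right_inv hζ.1
  have hP : ∀ ζ ∈ N, lewyP u (e.symm ζ) = P ζ := by
    intro ζ hζ
    simp only [lewyP, hinv ζ hζ, P, F, F1]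
  have hF : ∀ ζ ∈ N, HasDerivAt F (F1 ζ) ζ := by
    intro ζ hζ
    obtain ⟨T, W, hT, hW, hWT, -⟩ := hL _ hζ.2
    have hS : HasFDerivAt e.symm (T.symm : ℂ →L[ℝ] Plane) ζ :=
      e.hasFDerivAt_symm hζ.1 hT.hasFDerivAt
    have hFr : HasFDerivAt F (W.comp (T.symm : ℂ →L[ℝ] Plane)) ζ := hW.comp ζ hS
    rw [hasDerivAt_iff_hasFDerivAt]
    refine hasFDerivAt_of_restrictScalars ℝ hFr ?_
    ext v
    simp [hWT, F1, mul_comm]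
  have hFd : DifferentiableOn ℂ F N := fun ζ hζ =>
    (hF ζ hζ).differentiableAt.differentiableWithinAt
  have hF1d : DifferentiableOn ℂ F1 N :=
    (hFd.deriv hNo).congr fun ζ hζ => (hF ζ hζ).deriv.symm
  have hF2d : DifferentiableOn ℂ (deriv F1) N := hF1d.deriv hNo
  -- `∂u/∂ζ = P/8`, stated along the lines through `e a`.
  have hV : ∀ ζ ∈ N, ∀ (v : ℂ) (t : ℝ), e a + t * v = ζ →
      HasDerivAt (fun s : ℝ => u (e.symm (e a + s * v))) ((P ζ * v).re / 4) t := by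
    rintro ζ hζ v t rfl
    obtain ⟨T, W, hT, hW, hWT, hTW⟩ := hL _ hζ.2
    have hS : HasFDerivAt e.symm (T.symm : ℂ →L[ℝ] Plane) (e a + t * v) :=
      e.hasFDerivAt_symm hζ.1 hT.hasFDerivAt
    have hud : HasFDerivAt u (fderiv ℝ u (e.symm (e a + t * v))) (e.symm (e a + t * v)) :=
      ((hu.contDiffAt (hΩo.mem_nhds hζ.2)).differentiableAt (by norm_num)).hasFDerivAt
    have hline : HasDerivAt (fun s : ℝ => e a + s * v) v t := by
      simpa using ((Complex.ofRealCLM.hasDerivAt (x := t)).mul_const v).const_add (e a)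
    refine ((hud.comp _ hS).comp_hasDerivAt t hline).congr_deriv ?_
    set x := e.symm (e a + t * v) with hx
    obtain ⟨d, rfl⟩ : ∃ d, v = T d := ⟨T.symm v, by simp⟩
    rw [← hP _ hζ, ← hx, lewyP_eq]
    have h1 : (2 * (conj (⟨pd 0 u x, pd 1 u x⟩ : ℂ) + lewySlope u x * ⟨pd 0 u x, pd 1 u x⟩)
        * T d) = 2 * (conj (⟨pd 0 u x, pd 1 u x⟩ : ℂ) * T d + ⟨pd 0 u x, pd 1 u x⟩ * W d) := by
      rw [hWT]
      ring
    rw [h1]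
    have h2 := hTW d
    have h2r := congrArg Complex.re h2
    have h2i := congrArg Complex.im h2
    simp only [Complex.add_re, Complex.add_im, Complex.conj_re, Complex.conj_im,
      Complex.mul_re, Complex.mul_im, Complex.re_ofNat, Complex.im_ofNat] at h2r h2i
    simp only [ContinuousLinearMap.comp_apply, ContinuousLinearEquiv.coe_coe,
      ContinuousLinearEquiv.symm_apply_apply, fderiv_apply_eq, Complex.mul_re, Complex.mul_im,
      Complex.add_re, Complex.add_im, Complex.conj_re, Complex.conj_im,
      Complex.re_ofNat, Complex.im_ofNat]
    linear_combination (-pd 0 u x / 2) * h2r + (-pd 1 u x / 2) * h2i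
  have hJ : ∀ ζ ∈ N, (1 : ℂ) - F1 ζ * conj (F1 ζ) ≠ 0 := by
    intro ζ hζ
    obtain ⟨-, -, ha', hc'⟩ := hess_facts (hpos _ hζ.2) (hMA _ hζ.2)
    simp only [F1]
    rw [lewySlope_J (hpos _ hζ.2) (hMA _ hζ.2), Complex.ofReal_ne_zero]
    positivity
  have hcF : ContinuousAt F (e a) := (hF _ haN).continuousAt
  have hcF1 : ContinuousAt F1 (e a) :=
    (hF1d.differentiableAt (hNo.mem_nhds haN)).continuousAt
  have hcj : ∀ {h : ℂ → ℂ}, ContinuousAt h (e a) →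
      ContinuousAt (fun ζ => conj (h ζ)) (e a) := fun h =>
    Complex.continuous_conj.continuousAt.comp h
  have hcP : ContinuousAt P (e a) :=
    ((hcj continuousAt_id).sub hcF).add (hcF1.mul (continuousAt_id.sub (hcj hcF)))
  have hconst := eventually_const_of_isLocalMin (fun ζ => phiFn u (e.symm ζ)) (deriv F1)
    (fun ζ => conj (P ζ) ^ 2 / (2 * (1 - F1 ζ * conj (F1 ζ)) ^ 2)) (e a)
    (hF2d.analyticAt (hNo.mem_nhds haN))
    (((hcj hcP).pow 2).div
      (continuousAt_const.mul ((continuousAt_const.sub (hcF1.mul (hcj hcF1))).pow 2))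
      (mul_ne_zero two_ne_zero (pow_ne_zero _ (hJ _ haN))))
    (by
      refine div_ne_zero (pow_ne_zero _ ?_)
        (mul_ne_zero two_ne_zero (pow_ne_zero _ (hJ _ haN)))
      rw [← hP _ haN, hea]
      exact (map_ne_zero _).2 (lewyP_ne_zero (hpos a ha) (hMA a ha) hg))
    (by
      filter_upwards [hNo.mem_nhds haN] with ζ hζ v t htv
      have hline : HasDerivAt (fun s : ℝ => e a + s * v) v t := by
        simpa using ((Complex.ofRealCLM.hasDerivAt (x := t)).mul_const v).const_add (e a)
      have hFp : HasDerivAt (fun s : ℝ => F (e a + s * v)) (F1 (e a + t * v) * v) t :=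
        HasDerivAt.comp (h₂ := F) t (hF _ (by rw [htv]; exact hζ)) hline
      have hF1ζ : HasDerivAt F1 (deriv F1 ζ) (e a + t * v) := by
        rw [htv]
        exact (hF1d.differentiableAt (hNo.mem_nhds hζ)).hasDerivAt
      have hF1p : HasDerivAt (fun s : ℝ => F1 (e a + s * v)) (deriv F1 ζ * v) t :=
        HasDerivAt.comp (h₂ := F1) t hF1ζ hline
      have hVp := hV ζ hζ v t htv
      have hJp := hJ ζ hζ
      rw [← htv] at hVp hJp
      have hfin := hasDerivAt_phi_path (fun s : ℝ => e a + s * v)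
        (fun s : ℝ => F (e a + s * v)) (fun s : ℝ => F1 (e a + s * v)) _ v (deriv F1 ζ) t
        hline hFp hF1p hVp hJp
      have hfin' := hfin.congr_of_eventuallyEq (f₁ := fun s : ℝ => phiFn u (e.symm (e a + s * v)))
        (by
          have hev : ∀ᶠ s : ℝ in 𝓝 t, e a + s * v ∈ N :=
            hline.continuousAt.eventually_mem (hNo.mem_nhds (by rw [htv]; exact hζ))
          filter_upwards [hev] with s hs
          rw [phiFn_eq_lewy (hpos _ hs.2) (hMA _ hs.2), hP _ hs])
      rw [← htv] at hfin' ⊢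
      exact hfin')
    (by
      have hc : Filter.Tendsto e.symm (𝓝 (e a)) (𝓝 a) := e.tendsto_symm hae
      filter_upwards [hc.eventually hmin] with ζ hζ
      rw [hea]
      exact hζ)
  filter_upwards [(e.continuousAt hae).eventually hconst, e.open_source.mem_nhds hae]
    with x hx hxs
  rwa [e.left_inv hxs, hea] at hx

/-- In dimension 2, `φ = Σ u^{kl} u_k u_l − 2u` attains its minimum either on the
boundary or at the unique critical point `x₀` of `u`; moreover `φ(x₀) = −2u(x₀)`. -/
theorem phi_min_on_boundary_or_critical_point_dim2
    (Ω U : Set (EuclideanSpace ℝ (Fin 2)))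
    (hΩo : IsOpen Ω) (hΩc : Convex ℝ Ω) (hΩb : Bornology.IsBounded Ω)
    (hUo : IsOpen U) (hUcl : closure Ω ⊆ U)
    (u : EuclideanSpace ℝ (Fin 2) → ℝ)
    (hu : ContDiffOn ℝ 3 u U)
    (hpos : ∀ x ∈ Ω, (hess u x).PosDef)
    (hMA : ∀ x ∈ Ω, (hess u x).det = 1)
    (hbd : ∀ x ∈ frontier Ω, u x = 0)
    (x₀ : EuclideanSpace ℝ (Fin 2)) (hx₀ : x₀ ∈ Ω)
    (hcrit : fderiv ℝ u x₀ = 0)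
    (huniq : ∀ x ∈ Ω, fderiv ℝ u x = 0 → x = x₀) :
    (∀ x ∈ closure Ω,
      min (sInf (phiFn u '' frontier Ω)) (phiFn u x₀) ≤ phiFn u x) ∧
    phiFn u x₀ = -2 * u x₀ := by
  refine ⟨?_, by simp [phiFn, pd, hcrit]⟩
  have hcp : ∀ i, ContinuousOn (pd i u) (closure Ω) := fun i =>
    (contDiffOn_pd hUo (m := 2) (by norm_num) hu i).continuousOn.mono hUcl
  have hch : ∀ i j, ContinuousOn (fun x => hess u x i j) (closure Ω) := fun i j =>
    (contDiffOn_pd hUo (m := 1) (n := 2) (by norm_num)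
      (contDiffOn_pd hUo (by norm_num) hu j) i).continuousOn.mono hUcl
  have hdet : ∀ x ∈ closure Ω, (hess u x).det = 1 := by
    have hc : ContinuousOn (fun x => (hess u x).det) (closure Ω) := by
      simp only [Matrix.det_fin_two]
      exact ((hch 0 0).mul (hch 1 1)).sub ((hch 0 1).mul (hch 1 0))
    exact Set.EqOn.of_subset_closure (g := fun _ => (1 : ℝ)) hMA hc continuousOn_const
      subset_closure subset_rfl
  have hcφ : ContinuousOn (phiFn u) (closure Ω) := by
    refine ContinuousOn.congr ?_ fun x hx => phiFn_eq (hdet x hx)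
    exact (((((hch 1 1).mul ((hcp 0).pow 2)).sub
      ((((hch 0 1).add (hch 1 0)).mul (hcp 0)).mul (hcp 1))).add
      ((hch 0 0).mul ((hcp 1).pow 2))).sub
      (continuousOn_const.mul (hu.continuousOn.mono hUcl)))
  have hcomp : IsCompact (closure Ω) := hΩb.isCompact_closure
  obtain ⟨y, hy, hymin⟩ := hcomp.exists_isMinOn ⟨x₀, subset_closure hx₀⟩ hcφ
  rw [isMinOn_iff] at hymin
  intro x hx
  by_contra! hlt
  obtain ⟨hlt1, hlt2⟩ := lt_min_iff.1 hlt
  have hyx := hymin x hx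
  have hbdd : BddBelow (phiFn u '' frontier Ω) :=
    ⟨phiFn u y, by rintro _ ⟨z, hz, rfl⟩; exact hymin z (frontier_subset_closure hz)⟩
  -- The set `M` of minimum points avoids `∂Ω` and `x₀`; it is clopen in the plane.
  let M : Set Plane := closure Ω ∩ phiFn u ⁻¹' Set.Iic (phiFn u y)
  have hMcl : IsClosed M := hcφ.preimage_isClosed_of_isClosed isClosed_closure isClosed_Iic
  have hMΩ : M ⊆ Ω := by
    rintro z ⟨hz, hz'⟩
    by_contra hzΩ
    have hfr : z ∈ frontier Ω := by
      rw [hΩo.frontier_eq]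
      exact ⟨hz, hzΩ⟩
    have := csInf_le hbdd ⟨z, hfr, rfl⟩
    simp only [Set.mem_preimage, Set.mem_Iic] at hz'
    linarith
  have hMo : IsOpen M := by
    rw [isOpen_iff_mem_nhds]
    intro z hzM
    have hzΩ := hMΩ hzM
    have hzy : phiFn u z ≤ phiFn u y := hzM.2
    have hg : fderiv ℝ u z ≠ 0 := by
      intro h0
      rw [huniq z hzΩ h0] at hzy
      linarith
    have hloc : IsLocalMin (phiFn u) z := by
      filter_upwards [hΩo.mem_nhds hzΩ] with w hw
      exact hzy.trans (hymin w (subset_closure hw))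
    filter_upwards [hΩo.mem_nhds hzΩ, phiFn_eventually_const hΩo
      (hu.mono (subset_closure.trans hUcl)) hpos hMA hzΩ hg hloc] with w hw hwz
    exact ⟨subset_closure hw, by rw [Set.mem_preimage, hwz]; exact hzy⟩
  have huniv : M = Set.univ := IsClopen.eq_univ ⟨hMcl, hMo⟩ ⟨y, hy, le_refl (phiFn u y)⟩
  exact NormedSpace.unbounded_univ ℝ Plane (huniv ▸ hΩb.subset hMΩ)
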